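/- Let {X_t}_{t∈ℤ} be a strictly stationary mean-zero real sequence that is bounded: |X₀| ≤ C almost surely. Let φ(i) denote its φ-mixing coefficients. Then for every even-type integer p = 2, 3, … and every n ≥ 1, E|S_n|^p ≤ ( 8C²p Σ_{i=0}^{n−1} (n−i)φ(i) )^{p/2}, where S_n = Σ_{i=1}^n X_i. -/

import Mathlib

/-!
Write `T(x, s) = |x|^p + p |x|^(p-2) x (s - x)` for the tangent line of `|·|^p` at `x`, and let `U`
run from `0` to `S = ∑ Z_k` by switching on the summands one after the other and linearly, so that
`U = ∑_{k < m} Z_k + t Z_m`. Then `E T(U, S)` runs from `0` to `E|S|^p`, and its derivative in `t`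
is `p (p - 1) E[|U|^(p-2) Z_m (S - U)]`. Since `U` depends on the past of `m` only and `S - U` is a
combination of `Z_m, Z_{m+1}, …` with weights in `[0, 1]`, conditioning on the past bounds the
derivative by `p (p - 1) τ_m E|U|^(p-2)`, where `τ_m = ∑_{k ≥ m} ‖Z_m E[Z_k | ℱ_m]‖_∞`.

As `U` is itself a sum with weights in `[0, 1]`, proving the inequality for all such weights makes
an induction from `p - 2` to `p` possible: `E|U|^(p-2) ≤ (K B)^((p-2)/2)`, with `B` the sum of the
`τ_k` under the weights of `U`. The function `(K B)^(p/2)` has derivative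
`(p/2) K τ_m (K B)^(p/2-1)`, so it dominates `E T(U, S)` as soon as `K ≥ 2 (p - 1)`. Exponents below
`2` follow from `p = 2` by Jensen's inequality.

For a `φ`-mixing sequence, integrating `|P(A ∩ {Z_k ≥ s}) - P(A) P(Z_k ≥ s)| ≤ φ(k - m) P(A)` over
`s ∈ [-C, C]` shows `|E[Z_k | ℱ_m]| ≤ 2 C φ(k - m)`, hence `τ_m ≤ 2 C² ∑_{k ≥ m} φ(k - m)`.
-/

open MeasureTheory ProbabilityTheory Set Finset

variable {Ω : Type*}

/-- The σ-field of the past up to time `j` of a real process. -/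
def pastSigma (X : ℤ → Ω → ℝ) (j : ℤ) : MeasurableSpace Ω :=
  ⨆ (t : ℤ) (_ : t ≤ j), MeasurableSpace.comap (X t) inferInstance

/-- The σ-field of the future from time `j` on of a real process. -/
def futureSigma (X : ℤ → Ω → ℝ) (j : ℤ) : MeasurableSpace Ω :=
  ⨆ (t : ℤ) (_ : j ≤ t), MeasurableSpace.comap (X t) inferInstance

/-- The set of values whose supremum defines the φ-dependence coefficient
between two sub-σ-fields: values `|P(B|A) − P(B)|`. -/
def phiSet (m0 : MeasurableSpace Ω) (μ : Measure Ω)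
    (mA mB : MeasurableSpace Ω) : Set ℝ :=
  {x | ∃ A B : Set Ω, MeasurableSet[mA] A ∧ MeasurableSet[mB] B ∧ μ A ≠ 0 ∧
    x = |(μ (A ∩ B) / μ A).toReal - (μ B).toReal|}

/-- The φ-mixing coefficient `φ(i) = sup_j φ(σ(X_t, t ≤ j), σ(X_t, t ≥ j+i))`. -/
noncomputable def phiCoef (m0 : MeasurableSpace Ω) (μ : Measure Ω)
    (X : ℤ → Ω → ℝ) (i : ℕ) : ℝ :=
  sSup (⋃ j : ℤ, phiSet m0 μ (pastSigma X j) (futureSigma X (j + i)))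

section EssentiallyBounded

variable {m0 : MeasurableSpace Ω} {μ : Measure Ω} {E F : Type*}
  [NormedAddCommGroup E] [NormedAddCommGroup F]

theorem exists_ae_norm_le_of_memLp_top {W : Ω → E} (hW : MemLp W ⊤ μ) :
    ∃ M : ℝ, ∀ᵐ ω ∂μ, ‖W ω‖ ≤ M := by
  have hlt : eLpNormEssSup W μ < ⊤ := by simpa using hW.eLpNorm_lt_top
  obtain ⟨M, hM⟩ := eLpNormEssSup_lt_top_iff_isBoundedUnder.1 hlt
  exact ⟨M, (Filter.eventually_map.1 hM).mono fun ω hω => by exact_mod_cast hω⟩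

theorem memLp_top_prodMk {V : Ω → E} {W : Ω → F} (hV : MemLp V ⊤ μ) (hW : MemLp W ⊤ μ) :
    MemLp (fun ω => (V ω, W ω)) ⊤ μ := by
  obtain ⟨M, hM⟩ := exists_ae_norm_le_of_memLp_top hV
  obtain ⟨M', hM'⟩ := exists_ae_norm_le_of_memLp_top hW
  refine memLp_top_of_bound (hV.1.prodMk hW.1) (max M M') ?_
  filter_upwards [hM, hM'] with ω h h' using max_le_max h h'

theorem memLp_top_comp_of_continuous [ProperSpace E] {g : E → F} (hg : Continuous g)
    {W : Ω → E} (hW : MemLp W ⊤ μ) : MemLp (fun ω => g (W ω)) ⊤ μ := by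
  obtain ⟨M, hM⟩ := exists_ae_norm_le_of_memLp_top hW
  obtain ⟨D, hD⟩ := (isCompact_closedBall (0 : E) M).exists_bound_of_continuousOn hg.continuousOn
  refine memLp_top_of_bound (hg.comp_aestronglyMeasurable hW.1) D ?_
  filter_upwards [hM] with ω hω using hD _ (mem_closedBall_zero_iff.2 hω)

theorem hasDerivAt_integral_comp_of_memLp_top [IsFiniteMeasure μ] [ProperSpace E]
    [NormedSpace ℝ F] {g g' : ℝ → E → F} (hg : ∀ t, Continuous (g t))
    (hg' : Continuous (Function.uncurry g'))
    (hderiv : ∀ t w, HasDerivAt (fun t => g t w) (g' t w) t)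
    {W : Ω → E} (hW : MemLp W ⊤ μ) (t : ℝ) :
    HasDerivAt (fun t => ∫ ω, g t (W ω) ∂μ) (∫ ω, g' t (W ω) ∂μ) t := by
  obtain ⟨M, hM⟩ := exists_ae_norm_le_of_memLp_top hW
  obtain ⟨D, hD⟩ := ((isCompact_closedBall t 1).prod
    (isCompact_closedBall (0 : E) M)).exists_bound_of_continuousOn hg'.continuousOn
  have hint (s : ℝ) : Integrable (fun ω => g s (W ω)) μ :=
    (memLp_top_comp_of_continuous (hg s) hW).integrable le_top
  have hint' : Integrable (fun ω => g' t (W ω)) μ :=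
    (memLp_top_comp_of_continuous (hg'.uncurry_left t) hW).integrable le_top
  refine (hasDerivAt_integral_of_dominated_loc_of_deriv_le (bound := fun _ => D)
    (Metric.closedBall_mem_nhds t one_pos)
    (Filter.Eventually.of_forall fun s => (hint s).aestronglyMeasurable) (hint t)
    hint'.aestronglyMeasurable ?_ (integrable_const D)
    (Filter.Eventually.of_forall fun ω s _ => hderiv s (W ω))).2
  filter_upwards [hM] with ω hω s hs using hD (s, W ω) ⟨hs, mem_closedBall_zero_iff.2 hω⟩

end EssentiallyBounded

theorem integral_rpow_le_rpow_integral {m0 : MeasurableSpace Ω} {μ : Measure Ω}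
    [IsProbabilityMeasure μ] {f : Ω → ℝ} (hf : Integrable f μ) (hf0 : 0 ≤ᵐ[μ] f) {θ : ℝ}
    (hθ0 : 0 ≤ θ) (hθ1 : θ ≤ 1) : ∫ ω, f ω ^ θ ∂μ ≤ (∫ ω, f ω ∂μ) ^ θ := by
  by_cases hfθ : Integrable (fun ω => f ω ^ θ) μ
  · exact (Real.concaveOn_rpow hθ0 hθ1).le_map_integral
      (Real.continuous_rpow_const hθ0).continuousOn isClosed_Ici hf0 hf hfθ
  · rw [integral_undef hfθ]
    exact Real.rpow_nonneg (integral_nonneg_of_ae hf0) θ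

theorem continuous_abs_rpow {r : ℝ} (hr : 0 ≤ r) : Continuous fun x : ℝ => |x| ^ r :=
  (Real.continuous_rpow_const hr).comp continuous_abs

theorem hasDerivAt_abs_rpow_mul_self {r : ℝ} (hr : 0 ≤ r) (x : ℝ) :
    HasDerivAt (fun x : ℝ => |x| ^ r * x) ((r + 1) * |x| ^ r) x := by
  rcases eq_or_ne x 0 with rfl | hx
  · have hzero : (r + 1) * |(0 : ℝ)| ^ r = |(0 : ℝ)| ^ r := by
      rcases hr.eq_or_lt with rfl | hr
      · simp
      · simp [Real.zero_rpow hr.ne']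
    rw [hasDerivAt_iff_tendsto_slope, hzero]
    refine ((continuous_abs_rpow hr).tendsto 0 |>.mono_left nhdsWithin_le_nhds).congr' ?_
    filter_upwards [self_mem_nhdsWithin] with y (hy : y ≠ 0)
    simp [slope_def_field, hy]
  · have hpow : HasDerivAt (fun x : ℝ => |x| ^ r) (SignType.sign x * r * |x| ^ (r - 1)) x :=
      (hasDerivAt_abs hx).rpow_const (Or.inl (abs_ne_zero.2 hx))
    refine (hpow.mul (hasDerivAt_id x)).congr_deriv ?_
    have hsplit : |x| ^ r = |x| ^ (r - 1) * |x| := by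
      rw [← Real.rpow_add_one (abs_ne_zero.2 hx), sub_add_cancel]
    rw [hsplit, ← self_mul_sign x, id]
    ring

/-- The tangent line of `x ↦ |x| ^ p` at the point `x`, evaluated at `s`. -/
noncomputable def absRpowTangent (p x s : ℝ) : ℝ :=
  |x| ^ p + p * (|x| ^ (p - 2) * x) * (s - x)

theorem absRpowTangent_self (p x : ℝ) : absRpowTangent p x x = |x| ^ p := by
  simp [absRpowTangent]

theorem absRpowTangent_zero_left {p : ℝ} (hp : p ≠ 0) (s : ℝ) : absRpowTangent p 0 s = 0 := by
  simp [absRpowTangent, Real.zero_rpow hp]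

theorem continuous_absRpowTangent {p : ℝ} (hp : 2 ≤ p) :
    Continuous fun z : ℝ × ℝ => absRpowTangent p z.1 z.2 := by
  have hpow {r : ℝ} (hr : 0 ≤ r) : Continuous fun z : ℝ × ℝ => |z.1| ^ r :=
    (continuous_abs_rpow hr).comp continuous_fst
  have h₀ := hpow (show 0 ≤ p by linarith)
  have h₂ := hpow (show 0 ≤ p - 2 by linarith)
  unfold absRpowTangent
  fun_prop

theorem hasDerivAt_absRpowTangent {p : ℝ} (hp : 2 ≤ p) (x s : ℝ) :
    HasDerivAt (fun x => absRpowTangent p x s) (p * (p - 1) * (|x| ^ (p - 2) * (s - x))) x := by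
  have hpow := hasDerivAt_abs_rpow x (by linarith : 1 < p)
  have hslope := (hasDerivAt_abs_rpow_mul_self (by linarith : 0 ≤ p - 2) x).const_mul p
  refine (hpow.add (hslope.mul ((hasDerivAt_id x).const_sub s))).congr_deriv ?_
  simp only [id]
  ring

section Interpolation

variable {m0 : MeasurableSpace Ω} {μ : Measure Ω} [IsFiniteMeasure μ] {p : ℝ} {V Y S : Ω → ℝ}

theorem hasDerivAt_integral_absRpowTangent (hp : 2 ≤ p) (hV : MemLp V ⊤ μ) (hY : MemLp Y ⊤ μ)
    (hS : MemLp S ⊤ μ) (t : ℝ) :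
    HasDerivAt (fun t => ∫ ω, absRpowTangent p (V ω + t * Y ω) (S ω) ∂μ)
      (p * (p - 1) *
        ∫ ω, |V ω + t * Y ω| ^ (p - 2) * Y ω * (S ω - (V ω + t * Y ω)) ∂μ) t := by
  have hpow := continuous_abs_rpow (by linarith : 0 ≤ p - 2)
  rw [← integral_const_mul]
  refine hasDerivAt_integral_comp_of_memLp_top
    (g := fun t (w : ℝ × ℝ × ℝ) => absRpowTangent p (w.1 + t * w.2.1) w.2.2)
    (g' := fun t (w : ℝ × ℝ × ℝ) => p * (p - 1) *
      (|w.1 + t * w.2.1| ^ (p - 2) * w.2.1 * (w.2.2 - (w.1 + t * w.2.1))))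
    (fun t => (continuous_absRpowTangent hp).comp (by fun_prop : Continuous fun w : ℝ × ℝ × ℝ =>
      (w.1 + t * w.2.1, w.2.2))) ?_ (fun t w => ?_)
    (memLp_top_prodMk hV (memLp_top_prodMk hY hS)) t
  · have hpow' : Continuous fun z : ℝ × ℝ × ℝ × ℝ => |z.2.1 + z.1 * z.2.2.1| ^ (p - 2) :=
      hpow.comp (by fun_prop)
    unfold Function.uncurry
    fun_prop
  · have hpath : HasDerivAt (fun t => w.1 + t * w.2.1) w.2.1 t := by
      simpa using ((hasDerivAt_id t).mul_const w.2.1).const_add w.1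
    refine ((hasDerivAt_absRpowTangent hp _ w.2.2).comp t hpath).congr_deriv ?_
    ring

theorem hasDerivAt_rpow_affine {r : ℝ} (hr : 1 ≤ r) (K b c t : ℝ) :
    HasDerivAt (fun t => (K * (b + t * c)) ^ r) (r * K * (c * (K * (b + t * c)) ^ (r - 1))) t := by
  have hbase : HasDerivAt (fun t => K * (b + t * c)) (K * c) t := by
    simpa using (((hasDerivAt_id t).mul_const c).const_add b).const_mul K
  exact (hbase.rpow_const (Or.inr hr)).congr_deriv (by ring)

theorem integral_absRpowTangent_add_le {K b c : ℝ} (hp : 2 ≤ p) (hK : 2 * (p - 1) ≤ K)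
    (hb : 0 ≤ b) (hc : 0 ≤ c) (hV : MemLp V ⊤ μ) (hY : MemLp Y ⊤ μ) (hS : MemLp S ⊤ μ)
    (hcurv : ∀ t ∈ Set.Icc (0 : ℝ) 1,
      ∫ ω, |V ω + t * Y ω| ^ (p - 2) * Y ω * (S ω - (V ω + t * Y ω)) ∂μ ≤
        c * (K * (b + t * c)) ^ ((p - 2) / 2))
    (hinit : ∫ ω, absRpowTangent p (V ω) (S ω) ∂μ ≤ (K * b) ^ (p / 2)) :
    ∫ ω, absRpowTangent p (V ω + Y ω) (S ω) ∂μ ≤ (K * (b + c)) ^ (p / 2) := by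
  have hK0 : 0 ≤ K := by linarith
  have hL := hasDerivAt_integral_absRpowTangent hp hV hY hS
  have hG := hasDerivAt_rpow_affine (by linarith : 1 ≤ p / 2) K b c
  have hslope (t : ℝ) (ht : t ∈ Set.Ico (0 : ℝ) 1) :
      p * (p - 1) * ∫ ω, |V ω + t * Y ω| ^ (p - 2) * Y ω * (S ω - (V ω + t * Y ω)) ∂μ ≤
        p / 2 * K * (c * (K * (b + t * c)) ^ (p / 2 - 1)) := by
    have hexp : (p - 2) / 2 = p / 2 - 1 := by ring
    have hcoef : p * (p - 1) ≤ p / 2 * K := by nlinarith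
    have hmajor : 0 ≤ c * (K * (b + t * c)) ^ (p / 2 - 1) := by have := ht.1; positivity
    have hcoef0 : 0 ≤ p * (p - 1) := mul_nonneg (by linarith) (by linarith)
    exact (mul_le_mul_of_nonneg_left (hexp ▸ hcurv t (Set.Ico_subset_Icc_self ht)) hcoef0).trans
      (mul_le_mul_of_nonneg_right hcoef hmajor)
  have hle := image_le_of_deriv_right_le_deriv_boundary
    (fun t _ => (hL t).continuousAt.continuousWithinAt)
    (fun t _ => (hL t).hasDerivWithinAt) (by simpa using hinit)
    (fun t _ => (hG t).continuousAt.continuousWithinAt)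
    (fun t _ => (hG t).hasDerivWithinAt) hslope (Set.right_mem_Icc.2 zero_le_one)
  simpa using hle

end Interpolation

theorem integral_mul_eq_integral_mul_condExp {m m0 : MeasurableSpace Ω} {μ : Measure Ω}
    (hm : m ≤ m0) [SigmaFinite (μ.trim hm)] {f Z : Ω → ℝ} (hf : StronglyMeasurable[m] f)
    (hZ : Integrable Z μ) (hfZ : Integrable (fun ω => f ω * Z ω) μ) :
    ∫ ω, f ω * Z ω ∂μ = ∫ ω, f ω * (μ[Z | m]) ω ∂μ := by
  rw [← integral_condExp hm]
  exact integral_congr_ae (condExp_mul_of_stronglyMeasurable_left hf hfZ hZ)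

/-- The total conditional covariance bound `∑ β i k` between time `i` and its future
`i ≤ k < N`. -/
def tailSum (β : ℕ → ℕ → ℝ) (N i : ℕ) : ℝ :=
  ∑ k ∈ Finset.Ico i N, β i k

/-- An essentially bounded adapted sequence `Z` whose conditional covariances
`Z i * E[Z k | ℱ i]`, `i ≤ k`, are bounded by the constants `β i k`. -/
structure HasCondCovBound {m0 : MeasurableSpace Ω} (μ : Measure Ω) (ℱ : Filtration ℕ m0)
    (Z : ℕ → Ω → ℝ) (β : ℕ → ℕ → ℝ) : Prop where
  stronglyAdapted : StronglyAdapted ℱ Z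
  memLp_top : ∀ k, MemLp (Z k) ⊤ μ
  abs_mul_condExp_le : ∀ i k, i ≤ k → ∀ᵐ ω ∂μ, |Z i ω * (μ[Z k | ℱ i]) ω| ≤ β i k

theorem exists_weights_eq_partial_sum {a : ℕ → ℝ} (ha : a ∈ Set.Icc 0 1) {t : ℝ}
    (ht : t ∈ Set.Icc (0 : ℝ) 1) {m N : ℕ} (hm : m < N) :
    ∃ a' ∈ Set.Icc (0 : ℕ → ℝ) 1, ∀ z : ℕ → ℝ,
      ∑ k ∈ Finset.range N, a' k * z k = ∑ k ∈ Finset.range m, a k * z k + t * (a m * z m) := by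
  refine ⟨fun k => if k < m then a k else if k = m then t * a m else 0,
    ⟨fun k => ?_, fun k => ?_⟩, fun z => ?_⟩
  · have := ha.1 k
    have := mul_nonneg ht.1 (ha.1 m)
    dsimp only [Pi.zero_apply] at *
    split_ifs <;> linarith
  · have := ha.2 k
    have := mul_le_one₀ ht.2 (ha.1 m) (ha.2 m)
    dsimp only [Pi.one_apply] at *
    split_ifs <;> linarith
  · rw [← Finset.sum_range_add_sum_Ico _ hm.le, Finset.sum_eq_sum_Ico_succ_bot hm]
    have hpast : ∀ k ∈ Finset.range m,
        (if k < m then a k else if k = m then t * a m else 0) * z k = a k * z k := by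
      intro k hk
      rw [if_pos (Finset.mem_range.1 hk)]
    have hfuture : ∀ k ∈ Finset.Ico (m + 1) N,
        (if k < m then a k else if k = m then t * a m else 0) * z k = 0 := by
      intro k hk
      have := (Finset.mem_Ico.1 hk).1
      rw [if_neg (by omega), if_neg (by omega), zero_mul]
    rw [Finset.sum_congr rfl hpast, Finset.sum_eq_zero hfuture]
    simp [mul_assoc]

theorem exists_weights_eq_sum_sub_partial_sum {a : ℕ → ℝ} (ha : a ∈ Set.Icc 0 1) {t : ℝ}
    (ht : t ∈ Set.Icc (0 : ℝ) 1) {m N : ℕ} (hm : m < N) :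
    ∃ w ∈ Set.Icc (0 : ℕ → ℝ) 1, ∀ z : ℕ → ℝ,
      ∑ k ∈ Finset.range N, a k * z k - (∑ k ∈ Finset.range m, a k * z k + t * (a m * z m)) =
        ∑ k ∈ Finset.Ico m N, w k * z k := by
  refine ⟨Function.update a m ((1 - t) * a m), ⟨?_, ?_⟩, fun z => ?_⟩
  · exact le_update_iff.2
      ⟨mul_nonneg (sub_nonneg.2 ht.2) (ha.1 m), fun k _ => ha.1 k⟩
  · exact update_le_iff.2
      ⟨mul_le_one₀ (sub_le_self 1 ht.1) (ha.1 m) (ha.2 m), fun k _ => ha.2 k⟩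
  · have hfuture : ∀ k ∈ Finset.Ico (m + 1) N,
        Function.update a m ((1 - t) * a m) k * z k = a k * z k := by
      intro k hk
      have := (Finset.mem_Ico.1 hk).1
      rw [Function.update_of_ne (by omega)]
    rw [← Finset.sum_range_add_sum_Ico _ hm.le, Finset.sum_eq_sum_Ico_succ_bot hm,
      Finset.sum_eq_sum_Ico_succ_bot hm, Finset.sum_congr rfl hfuture, Function.update_self]
    ring

namespace HasCondCovBound

variable {m0 : MeasurableSpace Ω} {μ : Measure Ω} {ℱ : Filtration ℕ m0} {Z : ℕ → Ω → ℝ}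
  {β : ℕ → ℕ → ℝ}

theorem bound_nonneg [NeZero μ] (h : HasCondCovBound μ ℱ Z β) {i k : ℕ} (hik : i ≤ k) :
    0 ≤ β i k := by
  obtain ⟨ω, hω⟩ := (h.abs_mul_condExp_le i k hik).exists
  exact (abs_nonneg _).trans hω

theorem tailSum_nonneg [NeZero μ] (h : HasCondCovBound μ ℱ Z β) (N i : ℕ) :
    0 ≤ tailSum β N i :=
  Finset.sum_nonneg fun _ hk => h.bound_nonneg (Finset.mem_Ico.1 hk).1

theorem memLp_top_sum (h : HasCondCovBound μ ℱ Z β) (a : ℕ → ℝ) (s : Finset ℕ) :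
    MemLp (fun ω => ∑ k ∈ s, a k * Z k ω) ⊤ μ :=
  memLp_finsetSum s fun k _ => (h.memLp_top k).const_mul (a k)

theorem stronglyMeasurable_partial_sum (h : HasCondCovBound μ ℱ Z β) (a : ℕ → ℝ) (t : ℝ) (m : ℕ) :
    StronglyMeasurable[ℱ m]
      fun ω => ∑ k ∈ Finset.range m, a k * Z k ω + t * (a m * Z m ω) :=
  (Finset.stronglyMeasurable_fun_sum _ fun k hk =>
    ((h.stronglyAdapted k).mono (ℱ.mono (Finset.mem_range.1 hk).le)).const_mul (a k)).add
    (((h.stronglyAdapted m).const_mul (a m)).const_mul t)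

section FiniteMeasure

variable [IsFiniteMeasure μ]

theorem abs_integral_mul_mul_le (h : HasCondCovBound μ ℱ Z β) {i k : ℕ} (hik : i ≤ k)
    {f : Ω → ℝ} (hf : StronglyMeasurable[ℱ i] f) (hf_top : MemLp f ⊤ μ) :
    |∫ ω, f ω * Z i ω * Z k ω ∂μ| ≤ β i k * ∫ ω, |f ω| ∂μ := by
  have hfZ : MemLp (fun ω => f ω * Z i ω) ⊤ μ := (h.memLp_top i).mul hf_top
  have hfZZ : MemLp (fun ω => f ω * Z i ω * Z k ω) ⊤ μ := (h.memLp_top k).mul hfZ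
  have hint := hf_top.integrable le_top
  have hpull := integral_mul_eq_integral_mul_condExp (ℱ.le i) (hf.mul (h.stronglyAdapted i))
    ((h.memLp_top k).integrable le_top) (hfZZ.integrable le_top)
  simp only [Pi.mul_apply] at hpull
  rw [hpull, ← integral_const_mul, ← Real.norm_eq_abs]
  refine norm_integral_le_of_norm_le (hint.abs.const_mul (β i k)) ?_
  filter_upwards [h.abs_mul_condExp_le i k hik] with ω hω
  rw [mul_assoc, Real.norm_eq_abs, abs_mul, mul_comm]
  gcongr

theorem integral_mul_mul_sum_le (h : HasCondCovBound μ ℱ Z β) (N i : ℕ) {w : ℕ → ℝ}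
    (hw : w ∈ Set.Icc 0 1) {f : Ω → ℝ} (hf : StronglyMeasurable[ℱ i] f) (hf_top : MemLp f ⊤ μ) :
    ∫ ω, f ω * Z i ω * ∑ k ∈ Finset.Ico i N, w k * Z k ω ∂μ ≤ tailSum β N i * ∫ ω, |f ω| ∂μ := by
  have hint (k : ℕ) : Integrable (fun ω => f ω * Z i ω * Z k ω) μ :=
    ((h.memLp_top k).mul ((h.memLp_top i).mul hf_top : MemLp _ ⊤ μ) : MemLp _ ⊤ μ).integrable le_top
  calc ∫ ω, f ω * Z i ω * ∑ k ∈ Finset.Ico i N, w k * Z k ω ∂μ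
      = ∑ k ∈ Finset.Ico i N, w k * ∫ ω, f ω * Z i ω * Z k ω ∂μ := by
        simp_rw [Finset.mul_sum, mul_left_comm _ (w _)]
        rw [integral_finsetSum _ fun k _ => (hint k).const_mul (w k)]
        simp_rw [integral_const_mul]
    _ ≤ ∑ k ∈ Finset.Ico i N, β i k * ∫ ω, |f ω| ∂μ := by
        refine Finset.sum_le_sum fun k hk => ?_
        have hcov := h.abs_integral_mul_mul_le (Finset.mem_Ico.1 hk).1 hf hf_top
        calc w k * ∫ ω, f ω * Z i ω * Z k ω ∂μ
            ≤ w k * |∫ ω, f ω * Z i ω * Z k ω ∂μ| :=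
              mul_le_mul_of_nonneg_left (le_abs_self _) (hw.1 k)
          _ ≤ |∫ ω, f ω * Z i ω * Z k ω ∂μ| := mul_le_of_le_one_left (abs_nonneg _) (hw.2 k)
          _ ≤ β i k * ∫ ω, |f ω| ∂μ := hcov
    _ = tailSum β N i * ∫ ω, |f ω| ∂μ := by rw [tailSum, Finset.sum_mul]

theorem integral_curvature_le (h : HasCondCovBound μ ℱ Z β) {a : ℕ → ℝ} (ha : a ∈ Set.Icc 0 1)
    {t : ℝ} (ht : t ∈ Set.Icc (0 : ℝ) 1) {m N : ℕ} (hm : m < N) {r : ℝ} (hr : 0 ≤ r) :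
    ∫ ω, |∑ k ∈ Finset.range m, a k * Z k ω + t * (a m * Z m ω)| ^ r * (a m * Z m ω) *
        (∑ k ∈ Finset.range N, a k * Z k ω -
          (∑ k ∈ Finset.range m, a k * Z k ω + t * (a m * Z m ω))) ∂μ ≤
      a m * tailSum β N m *
        ∫ ω, |∑ k ∈ Finset.range m, a k * Z k ω + t * (a m * Z m ω)| ^ r ∂μ := by
  obtain ⟨w, hw, hrest⟩ := exists_weights_eq_sum_sub_partial_sum ha ht hm
  set U : Ω → ℝ := fun ω => ∑ k ∈ Finset.range m, a k * Z k ω + t * (a m * Z m ω) with hU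
  have hUtop : MemLp U ⊤ μ :=
    (h.memLp_top_sum a _).add (((h.memLp_top m).const_mul (a m)).const_mul t)
  have hpow : StronglyMeasurable[ℱ m] fun ω => |U ω| ^ r :=
    (continuous_abs_rpow hr).comp_stronglyMeasurable (h.stronglyMeasurable_partial_sum a t m)
  have hcov := h.integral_mul_mul_sum_le N m hw hpow
    (memLp_top_comp_of_continuous (continuous_abs_rpow hr) hUtop)
  simp_rw [abs_of_nonneg (Real.rpow_nonneg (abs_nonneg _) r)] at hcov
  calc ∫ ω, |U ω| ^ r * (a m * Z m ω) * (∑ k ∈ Finset.range N, a k * Z k ω - U ω) ∂μ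
      = a m * ∫ ω, |U ω| ^ r * Z m ω * ∑ k ∈ Finset.Ico m N, w k * Z k ω ∂μ := by
        rw [← integral_const_mul]
        refine integral_congr_ae (Filter.Eventually.of_forall fun ω => ?_)
        simp only [hU, hrest]
        ring
    _ ≤ a m * (tailSum β N m * ∫ ω, |U ω| ^ r ∂μ) := mul_le_mul_of_nonneg_left hcov (ha.1 m)
    _ = a m * tailSum β N m * ∫ ω, |U ω| ^ r ∂μ := (mul_assoc _ _ _).symm

theorem integral_abs_sum_rpow_le_of_sub_two [NeZero μ] (h : HasCondCovBound μ ℱ Z β) {K p : ℝ}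
    (hp : 2 ≤ p) (hK : 2 * (p - 1) ≤ K) (N : ℕ)
    (hprev : ∀ a ∈ Set.Icc (0 : ℕ → ℝ) 1,
      ∫ ω, |∑ k ∈ Finset.range N, a k * Z k ω| ^ (p - 2) ∂μ ≤
        (K * ∑ k ∈ Finset.range N, a k * tailSum β N k) ^ ((p - 2) / 2))
    {a : ℕ → ℝ} (ha : a ∈ Set.Icc 0 1) :
    ∫ ω, |∑ k ∈ Finset.range N, a k * Z k ω| ^ p ∂μ ≤
      (K * ∑ k ∈ Finset.range N, a k * tailSum β N k) ^ (p / 2) := by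
  have hterm (k : ℕ) : 0 ≤ a k * tailSum β N k := mul_nonneg (ha.1 k) (h.tailSum_nonneg N k)
  have htangent (m : ℕ) (hm : m ≤ N) :
      ∫ ω, absRpowTangent p (∑ k ∈ Finset.range m, a k * Z k ω)
          (∑ k ∈ Finset.range N, a k * Z k ω) ∂μ ≤
        (K * ∑ k ∈ Finset.range m, a k * tailSum β N k) ^ (p / 2) := by
    induction m with
    | zero =>
      simp [absRpowTangent_zero_left (by linarith : p ≠ 0),
        Real.zero_rpow (by linarith : p / 2 ≠ 0)]
    | succ m ih =>
      simp only [Finset.sum_range_succ _ m]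
      refine integral_absRpowTangent_add_le hp hK (Finset.sum_nonneg fun k _ => hterm k) (hterm m)
        (h.memLp_top_sum a _) ((h.memLp_top m).const_mul (a m)) (h.memLp_top_sum a _)
        (fun t ht => ?_) (ih (by omega))
      obtain ⟨a', ha', hpartial⟩ := exists_weights_eq_partial_sum ha ht hm
      have hmoment := hprev a' ha'
      simp only [hpartial] at hmoment
      exact (h.integral_curvature_le ha ht hm (by linarith)).trans
        (mul_le_mul_of_nonneg_left hmoment (hterm m))
  simpa only [absRpowTangent_self] using htangent N le_rfl

end FiniteMeasure

section ProbabilityMeasure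

variable [IsProbabilityMeasure μ]

theorem integral_abs_weighted_sum_rpow_le_of_le_two (h : HasCondCovBound μ ℱ Z β) {K : ℝ}
    (hK : 2 ≤ K) (N : ℕ) {r : ℝ} (hr0 : 0 ≤ r) (hr2 : r ≤ 2) {a : ℕ → ℝ} (ha : a ∈ Set.Icc 0 1) :
    ∫ ω, |∑ k ∈ Finset.range N, a k * Z k ω| ^ r ∂μ ≤
      (K * ∑ k ∈ Finset.range N, a k * tailSum β N k) ^ (r / 2) := by
  have hsq : ∫ ω, |∑ k ∈ Finset.range N, a k * Z k ω| ^ (2 : ℝ) ∂μ ≤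
      K * ∑ k ∈ Finset.range N, a k * tailSum β N k := by
    simpa using h.integral_abs_sum_rpow_le_of_sub_two le_rfl (by linarith) N (by simp) ha
  have hint : Integrable (fun ω => |∑ k ∈ Finset.range N, a k * Z k ω| ^ (2 : ℝ)) μ :=
    (memLp_top_comp_of_continuous (continuous_abs_rpow zero_le_two)
      (h.memLp_top_sum a _)).integrable le_top
  have hsq0 : ∀ ω, 0 ≤ |∑ k ∈ Finset.range N, a k * Z k ω| ^ (2 : ℝ) := fun ω => by positivity
  calc ∫ ω, |∑ k ∈ Finset.range N, a k * Z k ω| ^ r ∂μ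
      = ∫ ω, (|∑ k ∈ Finset.range N, a k * Z k ω| ^ (2 : ℝ)) ^ (r / 2) ∂μ := by
        simp_rw [← Real.rpow_mul (abs_nonneg _), mul_div_cancel₀ r (two_ne_zero' ℝ)]
    _ ≤ (∫ ω, |∑ k ∈ Finset.range N, a k * Z k ω| ^ (2 : ℝ) ∂μ) ^ (r / 2) :=
        integral_rpow_le_rpow_integral hint (Filter.Eventually.of_forall hsq0) (by linarith)
          (by linarith)
    _ ≤ (K * ∑ k ∈ Finset.range N, a k * tailSum β N k) ^ (r / 2) :=
        Real.rpow_le_rpow (integral_nonneg hsq0) hsq (by linarith)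

theorem integral_abs_weighted_sum_rpow_le (h : HasCondCovBound μ ℱ Z β) {K : ℝ} (hK2 : 2 ≤ K)
    (N : ℕ) {r : ℝ} (hr : 0 ≤ r) (hK : 2 * (r - 1) ≤ K) {a : ℕ → ℝ} (ha : a ∈ Set.Icc 0 1) :
    ∫ ω, |∑ k ∈ Finset.range N, a k * Z k ω| ^ r ∂μ ≤
      (K * ∑ k ∈ Finset.range N, a k * tailSum β N k) ^ (r / 2) := by
  obtain ⟨n, hn⟩ := exists_nat_ge (r / 2)
  induction n generalizing r a with
  | zero =>
    push_cast at hn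
    exact h.integral_abs_weighted_sum_rpow_le_of_le_two hK2 N hr (by linarith) ha
  | succ n ih =>
    push_cast at hn
    rcases le_total r 2 with hr2 | h2r
    · exact h.integral_abs_weighted_sum_rpow_le_of_le_two hK2 N hr hr2 ha
    · exact h.integral_abs_sum_rpow_le_of_sub_two h2r hK N
        (fun a' ha' => ih (by linarith) (by linarith) ha' (by linarith)) ha

theorem integral_abs_sum_rpow_le (h : HasCondCovBound μ ℱ Z β) {p : ℝ} (hp : 2 ≤ p) (N : ℕ) :
    ∫ ω, |∑ k ∈ Finset.range N, Z k ω| ^ p ∂μ ≤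
      (2 * (p - 1) * ∑ k ∈ Finset.range N, tailSum β N k) ^ (p / 2) := by
  simpa using h.integral_abs_weighted_sum_rpow_le (by linarith : 2 ≤ 2 * (p - 1)) N
    (by linarith : 0 ≤ p) le_rfl (Set.right_mem_Icc.2 zero_le_one)

end ProbabilityMeasure

end HasCondCovBound

theorem intervalIntegrable_measureReal_le {m0 : MeasurableSpace Ω} {ν : Measure Ω}
    [IsFiniteMeasure ν] (Z : Ω → ℝ) (u v : ℝ) :
    IntervalIntegrable (fun t => ν.real {ω | t ≤ Z ω}) volume u v :=
  Antitone.intervalIntegrable fun _ _ hst => measureReal_mono fun _ hω => hst.trans hω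

theorem integral_eq_intervalIntegral_measureReal_le {m0 : MeasurableSpace Ω} {ν : Measure Ω}
    [IsFiniteMeasure ν] {Z : Ω → ℝ} {M : ℝ} (hM : 0 ≤ M) (hZ : AEMeasurable Z ν)
    (hbdd : ∀ᵐ ω ∂ν, Z ω ∈ Set.Icc 0 M) :
    ∫ ω, Z ω ∂ν = ∫ t in 0..M, ν.real {ω | t ≤ Z ω} := by
  rw [intervalIntegral.integral_of_le hM]
  exact (Integrable.of_mem_Icc 0 M hZ hbdd).integral_eq_integral_Ioc_meas_le
    (hbdd.mono fun _ h => h.1) (hbdd.mono fun _ h => h.2)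

theorem abs_integral_sub_integral_le_of_abs_measureReal_sub_le {m0 : MeasurableSpace Ω}
    {ν₁ ν₂ : Measure Ω} [IsFiniteMeasure ν₁] [IsFiniteMeasure ν₂] {Z : Ω → ℝ} {M δ : ℝ}
    (hM : 0 ≤ M) (hZ₁ : AEMeasurable Z ν₁) (hZ₂ : AEMeasurable Z ν₂)
    (hbdd₁ : ∀ᵐ ω ∂ν₁, Z ω ∈ Set.Icc 0 M) (hbdd₂ : ∀ᵐ ω ∂ν₂, Z ω ∈ Set.Icc 0 M)
    (hδ : ∀ t, |ν₁.real {ω | t ≤ Z ω} - ν₂.real {ω | t ≤ Z ω}| ≤ δ) :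
    |∫ ω, Z ω ∂ν₁ - ∫ ω, Z ω ∂ν₂| ≤ δ * M := by
  rw [integral_eq_intervalIntegral_measureReal_le hM hZ₁ hbdd₁,
    integral_eq_intervalIntegral_measureReal_le hM hZ₂ hbdd₂,
    ← intervalIntegral.integral_sub (intervalIntegrable_measureReal_le Z 0 M)
      (intervalIntegrable_measureReal_le Z 0 M), ← Real.norm_eq_abs]
  calc ‖∫ t in 0..M, ν₁.real {ω | t ≤ Z ω} - ν₂.real {ω | t ≤ Z ω}‖
      ≤ δ * |M - 0| := intervalIntegral.norm_integral_le_of_norm_le_const fun t _ => hδ t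
    _ = δ * M := by rw [sub_zero, abs_of_nonneg hM]

theorem condExp_ae_le_const_of_setIntegral_le {m m0 : MeasurableSpace Ω} {μ : Measure Ω}
    [IsFiniteMeasure μ] (hm : m ≤ m0) {Z : Ω → ℝ} (hZ : Integrable Z μ) {d : ℝ}
    (h : ∀ A, MeasurableSet[m] A → ∫ ω in A, Z ω ∂μ ≤ d * μ.real A) :
    ∀ᵐ ω ∂μ, (μ[Z | m]) ω ≤ d := by
  refine ae_le_of_ae_le_trim (hm := hm) (ae_le_of_forall_setIntegral_le
    (integrable_condExp.trim hm stronglyMeasurable_condExp) (integrable_const d) fun A hA _ => ?_)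
  rw [← setIntegral_trim hm stronglyMeasurable_condExp hA, setIntegral_condExp hm hZ hA,
    setIntegral_const, smul_eq_mul, mul_comm, Measure.real, trim_measurableSet_eq hm hA]
  exact h A hA

theorem ae_abs_condExp_sub_le_of_abs_setIntegral_sub_le {m m0 : MeasurableSpace Ω}
    {μ : Measure Ω} [IsFiniteMeasure μ] (hm : m ≤ m0) {Z : Ω → ℝ} (hZ : Integrable Z μ) {c d : ℝ}
    (h : ∀ A, MeasurableSet[m] A → |∫ ω in A, Z ω ∂μ - c * μ.real A| ≤ d * μ.real A) :
    ∀ᵐ ω ∂μ, |(μ[Z | m]) ω - c| ≤ d := by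
  have hupper := condExp_ae_le_const_of_setIntegral_le hm hZ (d := c + d) fun A hA => by
    linarith [(abs_le.1 (h A hA)).2]
  have hlower := condExp_ae_le_const_of_setIntegral_le hm hZ.neg (d := d - c) fun A hA => by
    simp only [Pi.neg_apply, integral_neg]
    linarith [(abs_le.1 (h A hA)).1]
  filter_upwards [hupper, hlower, condExp_neg Z m (μ := μ)] with ω hu hl hneg
  rw [hneg, Pi.neg_apply] at hl
  exact abs_le.2 ⟨by linarith, by linarith⟩

section PhiMixing

variable {m0 : MeasurableSpace Ω} {μ : Measure Ω} {X : ℤ → Ω → ℝ}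

theorem measurable_pastSigma {t j : ℤ} (htj : t ≤ j) : Measurable[pastSigma X j] (X t) :=
  (comap_measurable (X t)).mono (le_iSup₂_of_le t htj le_rfl) le_rfl

theorem measurable_futureSigma {t j : ℤ} (hjt : j ≤ t) : Measurable[futureSigma X j] (X t) :=
  (comap_measurable (X t)).mono (le_iSup₂_of_le t hjt le_rfl) le_rfl

theorem pastSigma_le (hmeas : ∀ t, Measurable (X t)) (j : ℤ) : pastSigma X j ≤ m0 :=
  iSup₂_le fun t _ => (hmeas t).comap_le

theorem futureSigma_le (hmeas : ∀ t, Measurable (X t)) (j : ℤ) : futureSigma X j ≤ m0 :=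
  iSup₂_le fun t _ => (hmeas t).comap_le

theorem pastSigma_mono : Monotone (pastSigma X) := fun _ _ hij =>
  iSup₂_le fun t ht => le_iSup₂_of_le t (ht.trans hij) le_rfl

theorem phiCoef_nonneg (i : ℕ) : 0 ≤ phiCoef m0 μ X i := by
  refine Real.sSup_nonneg fun x hx => ?_
  obtain ⟨j, A, B, -, -, -, rfl⟩ := Set.mem_iUnion.1 hx
  exact abs_nonneg _

variable [IsProbabilityMeasure μ]

theorem phiSet_subset_Icc (mA mB : MeasurableSpace Ω) :
    phiSet m0 μ mA mB ⊆ Set.Icc 0 1 := by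
  rintro _ ⟨A, B, -, -, -, rfl⟩
  refine ⟨abs_nonneg _, abs_sub_le_of_nonneg_of_le ENNReal.toReal_nonneg ?_
    measureReal_nonneg measureReal_le_one⟩
  rw [ENNReal.toReal_div]
  exact div_le_one_of_le₀ (measureReal_mono Set.inter_subset_left) measureReal_nonneg

theorem le_phiCoef {x : ℝ} {i : ℕ} {j : ℤ}
    (hx : x ∈ phiSet m0 μ (pastSigma X j) (futureSigma X (j + i))) : x ≤ phiCoef m0 μ X i := by
  refine le_csSup ⟨1, ?_⟩ (Set.mem_iUnion.2 ⟨j, hx⟩)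
  exact fun y hy => (Set.iUnion_subset (fun _ => phiSet_subset_Icc _ _) hy).2

theorem abs_measureReal_inter_sub_mul_le {i : ℕ} {j : ℤ} {A B : Set Ω}
    (hA : MeasurableSet[pastSigma X j] A) (hB : MeasurableSet[futureSigma X (j + i)] B) :
    |μ.real (A ∩ B) - μ.real A * μ.real B| ≤ phiCoef m0 μ X i * μ.real A := by
  rcases eq_or_ne (μ A) 0 with hA0 | hA0
  · simp [Measure.real, hA0, measure_mono_null Set.inter_subset_left hA0]
  · have hpos : 0 < μ.real A := ENNReal.toReal_pos hA0 (measure_ne_top μ A)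
    have hφ : |μ.real (A ∩ B) / μ.real A - μ.real B| ≤ phiCoef m0 μ X i :=
      le_phiCoef ⟨A, B, hA, hB, hA0, by rw [ENNReal.toReal_div]; rfl⟩
    calc |μ.real (A ∩ B) - μ.real A * μ.real B|
        = |μ.real (A ∩ B) / μ.real A - μ.real B| * μ.real A := by
          rw [← abs_of_pos hpos, ← abs_mul, abs_of_pos hpos, sub_mul, div_mul_cancel₀ _ hpos.ne',
            mul_comm (μ.real A)]
      _ ≤ phiCoef m0 μ X i * μ.real A := mul_le_mul_of_nonneg_right hφ hpos.le

theorem abs_setIntegral_sub_mul_integral_le (hmeas : ∀ t, Measurable (X t)) {C : ℝ} {i : ℕ}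
    {j : ℤ} {A : Set Ω} (hA : MeasurableSet[pastSigma X j] A) {Z : Ω → ℝ}
    (hZ : Measurable[futureSigma X (j + i)] Z) (hbdd : ∀ᵐ ω ∂μ, |Z ω| ≤ C) :
    |∫ ω in A, Z ω ∂μ - (∫ ω, Z ω ∂μ) * μ.real A| ≤ 2 * C * phiCoef m0 μ X i * μ.real A := by
  have hfut := futureSigma_le hmeas (j + i)
  have hZm : Measurable Z := hZ.mono hfut le_rfl
  have hC : 0 ≤ C := by
    obtain ⟨ω, hω⟩ := hbdd.exists
    exact (abs_nonneg _).trans hω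
  have hint : Integrable Z μ := Integrable.of_bound hZm.aestronglyMeasurable C hbdd
  have hshift : ∀ᵐ ω ∂μ, Z ω + C ∈ Set.Icc 0 (2 * C) := hbdd.mono fun ω hω =>
    ⟨by linarith [(abs_le.1 hω).1], by linarith [(abs_le.1 hω).2]⟩
  have : IsFiniteMeasure (μ A • μ) := Measure.smul_finite μ (measure_ne_top μ A)
  have hcomp := abs_integral_sub_integral_le_of_abs_measureReal_sub_le (ν₁ := μ.restrict A)
    (ν₂ := μ A • μ) (Z := fun ω => Z ω + C) (M := 2 * C) (δ := phiCoef m0 μ X i * μ.real A)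
    (by linarith) (hZm.add_const C).aemeasurable (hZm.add_const C).aemeasurable
    (ae_restrict_of_ae hshift) (Measure.ae_smul_measure hshift _) fun t => by
      have hB : MeasurableSet[futureSigma X (j + i)] {ω | t ≤ Z ω + C} :=
        measurableSet_le measurable_const (hZ.add_const C)
      rw [measureReal_restrict_apply (hfut _ hB), Set.inter_comm, measureReal_ennreal_smul_apply]
      exact abs_measureReal_inter_sub_mul_le hA hB
  rw [integral_smul_measure, integral_add hint (integrable_const C),
    integral_add hint.restrict (integrable_const C)] at hcomp
  convert hcomp using 1
  · simp [Measure.real]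
    ring_nf
  · ring

theorem ae_abs_condExp_pastSigma_sub_integral_le (hmeas : ∀ t, Measurable (X t)) {C : ℝ} {i : ℕ}
    {j : ℤ} {Z : Ω → ℝ} (hZ : Measurable[futureSigma X (j + i)] Z)
    (hbdd : ∀ᵐ ω ∂μ, |Z ω| ≤ C) :
    ∀ᵐ ω ∂μ, |(μ[Z | pastSigma X j]) ω - ∫ ω, Z ω ∂μ| ≤ 2 * C * phiCoef m0 μ X i := by
  have hZm : Measurable Z := hZ.mono (futureSigma_le hmeas _) le_rfl
  exact ae_abs_condExp_sub_le_of_abs_setIntegral_sub_le (pastSigma_le hmeas j)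
    (Integrable.of_bound hZm.aestronglyMeasurable C hbdd)
    fun A hA => abs_setIntegral_sub_mul_integral_le hmeas hA hZ hbdd

/-- The natural filtration of the two-sided process `X`, indexed by `ℕ` so that the variable at
time `k` is the summand `X (k + 1)` of the partial sum `∑ k < n, X (k + 1)`. -/
def pastFiltration (hmeas : ∀ t, Measurable (X t)) : Filtration ℕ m0 where
  seq k := pastSigma X (k + 1)
  mono' _ _ hij := pastSigma_mono (by omega)
  le' _ := pastSigma_le hmeas _

theorem hasCondCovBound_pastFiltration (hmeas : ∀ t, Measurable (X t))
    (hmean : ∀ t, ∫ ω, X t ω ∂μ = 0) {C : ℝ} (hbdd : ∀ t, ∀ᵐ ω ∂μ, |X t ω| ≤ C) :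
    HasCondCovBound μ (pastFiltration hmeas) (fun k => X (k + 1))
      fun i k => C * (2 * C * phiCoef m0 μ X (k - i)) where
  stronglyAdapted k := (measurable_pastSigma le_rfl).stronglyMeasurable
  memLp_top k := memLp_top_of_bound (hmeas _).aestronglyMeasurable C (hbdd _)
  abs_mul_condExp_le i k hik := by
    have hfuture : Measurable[futureSigma X ((i + 1 : ℤ) + (k - i : ℕ))] (X (k + 1)) :=
      measurable_futureSigma (by omega)
    filter_upwards [hbdd (i + 1),
      ae_abs_condExp_pastSigma_sub_integral_le hmeas hfuture (hbdd _)] with ω hZ hcond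
    rw [hmean, sub_zero] at hcond
    rw [abs_mul]
    exact mul_le_mul hZ hcond (abs_nonneg _) ((abs_nonneg _).trans hZ)

end PhiMixing

theorem sum_range_sum_Ico_sub {M : Type*} [AddCommMonoid M] (g : ℕ → M) (n : ℕ) :
    ∑ m ∈ Finset.range n, ∑ k ∈ Finset.Ico m n, g (k - m) =
      ∑ i ∈ Finset.range n, (n - i) • g i := by
  simp_rw [Finset.sum_Ico_eq_sum_range, Nat.add_sub_cancel_left]
  rw [Finset.sum_comm' (t' := Finset.range n) (s' := fun i => Finset.range (n - i))
    (by simp only [Finset.mem_range]; omega)]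
  simp

theorem identDistrib_zero_of_identDistrib_shift {m0 : MeasurableSpace Ω} {μ : Measure Ω}
    {X : ℤ → Ω → ℝ} (hstat : ∀ k : ℤ, IdentDistrib (fun ω (t : ℤ) => X t ω)
      (fun ω (t : ℤ) => X (t + k) ω) μ μ) (k : ℤ) : IdentDistrib (X 0) (X k) μ μ := by
  simpa [Function.comp_def] using (hstat k).comp (measurable_pi_apply 0)

theorem moment_ineq_phi_mixing_general {m0 : MeasurableSpace Ω} {μ : Measure Ω}
    [IsProbabilityMeasure μ] {X : ℤ → Ω → ℝ} (hmeas : ∀ t, Measurable (X t))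
    (hmean : ∀ t, ∫ ω, X t ω ∂μ = 0) {C : ℝ} (hbdd : ∀ t, ∀ᵐ ω ∂μ, |X t ω| ≤ C)
    {p : ℝ} (hp : 2 ≤ p) (n : ℕ) :
    ∫ ω, |∑ i ∈ Finset.range n, X (i + 1) ω| ^ p ∂μ ≤
      (4 * C ^ 2 * (p - 1) *
        ∑ i ∈ Finset.range n, ((n - i : ℕ) : ℝ) * phiCoef m0 μ X i) ^ (p / 2) := by
  refine ((hasCondCovBound_pastFiltration hmeas hmean hbdd).integral_abs_sum_rpow_le
    hp n).trans_eq ?_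
  simp only [tailSum, ← Finset.mul_sum, ← nsmul_eq_mul, ← sum_range_sum_Ico_sub]
  ring_nf

/-- Dedecker–Prieur moment inequality: for a strictly stationary mean-zero
bounded sequence, `E|S_n|^p ≤ (8C²p Σ_{i=0}^{n−1}(n−i)φ(i))^{p/2}`. -/
theorem moment_ineq_phi_mixing (m0 : MeasurableSpace Ω) (μ : Measure Ω)
    [IsProbabilityMeasure μ] (X : ℤ → Ω → ℝ)
    (hmeas : ∀ t, Measurable (X t))
    (hstat : ∀ k : ℤ, IdentDistrib (fun ω (t : ℤ) => X t ω)
      (fun ω (t : ℤ) => X (t + k) ω) μ μ)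
    (hmean : (∫ ω, X 0 ω ∂μ) = 0) (C : ℝ)
    (hbdd : ∀ᵐ ω ∂μ, |X 0 ω| ≤ C)
    (p : ℕ) (hp : 2 ≤ p) (n : ℕ) (hn : 1 ≤ n) :
    (∫ ω, |∑ i ∈ range n, X (i + 1) ω| ^ p ∂μ) ≤
      (8 * C ^ 2 * (p : ℝ) *
          ∑ i ∈ range n, ((n - i : ℕ) : ℝ) * phiCoef m0 μ X i) ^ ((p : ℝ) / 2) := by
  have hident := identDistrib_zero_of_identDistrib_shift hstat
  have hmeans (t : ℤ) : ∫ ω, X t ω ∂μ = 0 := (hident t).integral_eq ▸ hmean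
  have hbdds (t : ℤ) : ∀ᵐ ω ∂μ, |X t ω| ≤ C :=
    (hident t).ae_snd (p := fun x => |x| ≤ C)
      (measurableSet_le measurable_norm measurable_const) hbdd
  have hp' : (2 : ℝ) ≤ p := by exact_mod_cast hp
  have hsharp := moment_ineq_phi_mixing_general hmeas hmeans hbdds hp' n
  simp only [Real.rpow_natCast] at hsharp
  have hsum : 0 ≤ ∑ i ∈ Finset.range n, ((n - i : ℕ) : ℝ) * phiCoef m0 μ X i :=
    Finset.sum_nonneg fun i _ => mul_nonneg (Nat.cast_nonneg _) (phiCoef_nonneg i)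
  have hcoef : 4 * C ^ 2 * ((p : ℝ) - 1) ≤ 8 * C ^ 2 * p := by nlinarith [sq_nonneg C]
  have hcoef0 : 0 ≤ 4 * C ^ 2 * ((p : ℝ) - 1) := mul_nonneg (by positivity) (by linarith)
  exact hsharp.trans (Real.rpow_le_rpow (mul_nonneg hcoef0 hsum)
    (mul_le_mul_of_nonneg_right hcoef hsum) (by positivity))
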